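/- (Finite-time blow-up for p > 2, γ > 0.) Let l > 0, γ > 0 and p > 2. Let u₀ > 0 be a smooth function on [-l,l] with ∂ₓₓ log u₀ > 0 satisfying the compatibility condition, and let u be a positive classical solution of the 1D logarithmic diffusion problem on [-l,l] × [0,T) with initial data u₀. Then the mass m(t) = ∫_{-l}^{l} u(x,t) dx satisfies m(t)^{p-2} ≥ 1/( m(0)^{2-p} + β t ) for all t ∈ [0,T), where β = 2(2-p)γ/(2l)^{p-1} < 0. In particular T ≤ m(0)^{2-p}/(-β) < ∞: the solution blows up in finite time and cannot be extended as a classical solution beyond time m(0)^{2-p}/(-β). -/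

import Mathlib

/- STATEMENT 18: Finite-time blow-up for p > 2, γ > 0: the mass m(t) = ∫_{-l}^{l} u(x,t) dx
satisfies m(t)^{p-2} ≥ 1/(m(0)^{2-p} + βt) with β = 2(2-p)γ/(2l)^{p-1} < 0, so
T ≤ m(0)^{2-p}/(-β). -/

open Set Real

/-- `u` is a positive classical solution on `[-l,l] × [0,T)` of
`∂ₜu = ∂ₓₓ log u` with boundary conditions `∂ₓu(±l,t) = ±2γ u(±l,t)^p` and initial data `u₀`. -/
def IsLogDiffSol (l γ p T : ℝ) (u₀ : ℝ → ℝ) (u : ℝ → ℝ → ℝ) : Prop :=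
  ContDiffOn ℝ 2 (fun q : ℝ × ℝ => u q.1 q.2) (Icc (-l) l ×ˢ Ico 0 T) ∧
  (∀ x ∈ Icc (-l) l, ∀ t ∈ Ico (0:ℝ) T, 0 < u x t) ∧
  (∀ x ∈ Icc (-l) l, ∀ t ∈ Ioo (0:ℝ) T,
    deriv (u x) t = deriv (deriv (fun y => Real.log (u y t))) x) ∧
  (∀ t ∈ Ioo (0:ℝ) T, deriv (fun y => u y t) l = 2 * γ * u l t ^ p) ∧
  (∀ t ∈ Ioo (0:ℝ) T, deriv (fun y => u y t) (-l) = -(2 * γ * u (-l) t ^ p)) ∧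
  (∀ x ∈ Icc (-l) l, u x 0 = u₀ x)

/-- `u` is a global (`T = ∞`) positive classical solution on `[-l,l] × [0,∞)`. -/
def IsLogDiffSolGlobal (l γ p : ℝ) (u₀ : ℝ → ℝ) (u : ℝ → ℝ → ℝ) : Prop :=
  ContDiffOn ℝ 2 (fun q : ℝ × ℝ => u q.1 q.2) (Icc (-l) l ×ˢ Ici 0) ∧
  (∀ x ∈ Icc (-l) l, ∀ t ∈ Ici (0:ℝ), 0 < u x t) ∧
  (∀ x ∈ Icc (-l) l, ∀ t ∈ Ioi (0:ℝ),
    deriv (u x) t = deriv (deriv (fun y => Real.log (u y t))) x) ∧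
  (∀ t ∈ Ioi (0:ℝ), deriv (fun y => u y t) l = 2 * γ * u l t ^ p) ∧
  (∀ t ∈ Ioi (0:ℝ), deriv (fun y => u y t) (-l) = -(2 * γ * u (-l) t ^ p)) ∧
  (∀ x ∈ Icc (-l) l, u x 0 = u₀ x)

/-- The compatibility condition `∂ₓ log u₀(±l) = ±2γ u₀(±l)^{p-1}`. -/
def CompatCond (l γ p : ℝ) (u₀ : ℝ → ℝ) : Prop :=
  deriv (fun x => Real.log (u₀ x)) l = 2 * γ * u₀ l ^ (p - 1) ∧
  deriv (fun x => Real.log (u₀ x)) (-l) = -(2 * γ * u₀ (-l) ^ (p - 1))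

/-- `u_min(t) = min_{x ∈ [-l,l]} u(x,t)`. -/
noncomputable def uMin (l : ℝ) (u : ℝ → ℝ → ℝ) (t : ℝ) : ℝ :=
  sInf ((fun x => u x t) '' Icc (-l) l)

/-- `u_max(t) = max_{x ∈ [-l,l]} u(x,t)`. -/
noncomputable def uMax (l : ℝ) (u : ℝ → ℝ → ℝ) (t : ℝ) : ℝ :=
  sSup ((fun x => u x t) '' Icc (-l) l)

/-!
The mass grows by the boundary flux, `m' = 2γ (u(l)^(p-1) + u(-l)^(p-1))`. If `log u(·,t)` is
convex, then `u(·,t)` is largest at an endpoint, where it is at least the mean `m / (2l)`. Hence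
`m' ≥ 2γ (m / (2l))^(p-1)`, that is `(m^(2-p))' ≤ β`, and since `m^(2-p)` is positive this gives
both the lower bound on the mass and the bound on `T`.

By the equation, convexity of `log u(·,t)` means `∂ₜu ≥ 0`. A solution that is only `C²` does not
allow the equation to be differentiated, so comparison is used twice instead: the initial datum is
a stationary subsolution, whence `u(·,0) ≤ u(·,h)`, and then `u(·,t) ≤ u(·,t+h)` because `u` and
its time shift solve the same problem. Comparison itself is the maximum principle for
`d = log v - log w`, which satisfies linear differential inequalities with a Robin condition.
-/

open scoped Topology

/-! ### Maximum principle -/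

section Touching

variable {f g : ℝ → ℝ} {x : ℝ}

lemma sub_mul_le_sub_mul_of_touching {f' g' y : ℝ} {s : Set ℝ} (hs : Convex ℝ s) (hx : x ∈ s)
    (hy : y ∈ s) (htouch : g x = f x) (hle : ∀ z ∈ s, g z ≤ f z)
    (hf : HasDerivWithinAt f f' s x) (hg : HasDerivWithinAt g g' s x) :
    (y - x) * g' ≤ (y - x) * f' := by
  have hmin : IsMinOn (fun z => f z - g z) s x := fun z hz => by
    simpa [htouch] using hle z hz
  have hvar : 0 ≤ (y - x) * (f' - g') := by
    simpa using hmin.localize.hasFDerivWithinAt_nonneg (hf.sub hg).hasFDerivWithinAt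
      (sub_mem_posTangentConeAt_of_segment_subset (hs.segment_subset hx hy))
  linarith

lemma deriv_deriv_nonneg_of_isLocalMin (hmin : IsLocalMin f x) (hf : ContinuousAt f x) :
    0 ≤ deriv (deriv f) x := by
  by_contra! hneg
  have hmax : IsLocalMax f x := isLocalMax_of_deriv_deriv_neg hneg hmin.deriv_eq_zero hf
  have hconst : f =ᶠ[𝓝 x] fun _ => f x := by
    filter_upwards [hmin, hmax] with y hle hge using le_antisymm hge hle
  simp [hconst.deriv.deriv_eq] at hneg

lemma deriv_deriv_sub (hf : ContDiffAt ℝ 2 f x) (hg : ContDiffAt ℝ 2 g x) :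
    deriv (deriv fun y => f y - g y) x = deriv (deriv f) x - deriv (deriv g) x := by
  simpa [iteratedDeriv_succ, iteratedDeriv_zero] using iteratedDeriv_fun_sub hf hg

lemma deriv_deriv_le_of_touching (hf : ContDiffAt ℝ 2 f x) (hg : ContDiffAt ℝ 2 g x)
    (htouch : g x = f x) (hle : ∀ᶠ y in 𝓝 x, g y ≤ f y) :
    deriv (deriv g) x ≤ deriv (deriv f) x := by
  have hmin : IsLocalMin (fun y => f y - g y) x := by
    filter_upwards [hle] with y hy
    simpa [htouch] using hy
  have hconvex := deriv_deriv_nonneg_of_isLocalMin hmin (hf.sub hg).continuousAt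
  rwa [deriv_deriv_sub hf hg, sub_nonneg] at hconvex

end Touching

lemma exists_touching_from_below {X : Type*} [TopologicalSpace X] {s : Set X} {f g : X → ℝ}
    (hs : IsCompact s) (hf : ContinuousOn f s) (hg : ContinuousOn g s)
    (hgpos : ∀ x ∈ s, 0 < g x) (hneg : ∃ x ∈ s, f x < 0) :
    ∃ m < 0, ∃ x₀ ∈ s, m * g x₀ = f x₀ ∧ ∀ x ∈ s, m * g x ≤ f x := by
  obtain ⟨x₁, hx₁, hfx₁⟩ := hneg
  obtain ⟨x₀, hx₀, hmin⟩ :=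
    hs.exists_isMinOn ⟨x₁, hx₁⟩ (hf.div hg fun x hx => (hgpos x hx).ne')
  exact ⟨f x₀ / g x₀, (hmin hx₁).trans_lt (div_neg_of_neg_of_pos hfx₁ (hgpos x₁ hx₁)), x₀, hx₀,
    div_mul_cancel₀ _ (hgpos x₀ hx₀).ne', fun x hx => (le_div_iff₀ (hgpos x hx)).1 (hmin hx)⟩

/-- The barrier of the maximum principle: `A` steepens it at the lateral boundary, and `K` makes it
grow in time. -/
noncomputable def expBarrier (m K A x t : ℝ) : ℝ :=
  m * exp (K * t + A * x ^ 2)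

section ExpBarrier

variable (m K A x t : ℝ)

lemma hasDerivAt_expBarrier_time :
    HasDerivAt (expBarrier m K A x) (K * expBarrier m K A x t) t := by
  have hexponent : HasDerivAt (fun s => K * s + A * x ^ 2) K t := by
    simpa using ((hasDerivAt_id t).const_mul K).add_const (A * x ^ 2)
  exact (hexponent.exp.const_mul m).congr_deriv (by rw [expBarrier]; ring)

lemma hasDerivAt_expBarrier_space :
    HasDerivAt (fun y => expBarrier m K A y t) (2 * A * x * expBarrier m K A x t) x := by
  have hexponent : HasDerivAt (fun y => K * t + A * y ^ 2) (A * (2 * x)) x := by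
    simpa using ((hasDerivAt_pow 2 x).const_mul A).const_add (K * t)
  exact (hexponent.exp.const_mul m).congr_deriv (by rw [expBarrier]; ring)

lemma deriv_deriv_expBarrier_space :
    deriv (deriv fun y => expBarrier m K A y t) x =
      (2 * A + 4 * A ^ 2 * x ^ 2) * expBarrier m K A x t := by
  have hderiv :
      deriv (fun y => expBarrier m K A y t) = fun y => 2 * A * y * expBarrier m K A y t :=
    funext fun y => (hasDerivAt_expBarrier_space m K A y t).deriv
  rw [hderiv]
  refine (((hasDerivAt_id x).const_mul (2 * A)).mul
    (hasDerivAt_expBarrier_space m K A x t)).deriv.trans ?_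
  simp only [id_eq]
  ring

lemma contDiff_expBarrier_space {n : WithTop ℕ∞} :
    ContDiff ℝ n fun y => expBarrier m K A y t := by
  unfold expBarrier
  fun_prop

end ExpBarrier

lemma exists_expBarrier_touching {l τ : ℝ} {d : ℝ → ℝ → ℝ}
    (hcont : ContinuousOn (fun q : ℝ × ℝ => d q.1 q.2) (Icc (-l) l ×ˢ Icc 0 τ))
    (hinit : ∀ x ∈ Icc (-l) l, 0 ≤ d x 0) (hneg : ∃ x ∈ Icc (-l) l, ∃ t ∈ Icc 0 τ, d x t < 0)
    (K A : ℝ) :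
    ∃ m, ∃ x₀ ∈ Icc (-l) l, ∃ t₀ ∈ Ioc 0 τ, d x₀ t₀ < 0 ∧ expBarrier m K A x₀ t₀ = d x₀ t₀ ∧
      ∀ x ∈ Icc (-l) l, ∀ t ∈ Icc 0 τ, expBarrier m K A x t ≤ d x t := by
  obtain ⟨x₁, hx₁, t₁, ht₁, hneg⟩ := hneg
  obtain ⟨m, hm, ⟨x₀, t₀⟩, ⟨hx₀, ht₀⟩, htouch, hbelow⟩ :=
    exists_touching_from_below (g := fun q : ℝ × ℝ => exp (K * q.2 + A * q.1 ^ 2))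
      (isCompact_Icc.prod isCompact_Icc) hcont (by fun_prop) (fun q _ => exp_pos _)
      ⟨(x₁, t₁), ⟨hx₁, ht₁⟩, hneg⟩
  have hd : d x₀ t₀ < 0 := htouch ▸ mul_neg_of_neg_of_pos hm (exp_pos _)
  have ht₀ne : 0 ≠ t₀ := by
    rintro rfl
    exact hd.not_ge (hinit x₀ hx₀)
  exact ⟨m, x₀, hx₀, t₀, ⟨ht₀.1.lt_of_ne ht₀ne, ht₀.2⟩, hd, htouch,
    fun x hx t ht => hbelow (x, t) ⟨hx, ht⟩⟩

lemma deriv_deriv_gt_of_expBarrier_touching {m K A C a x₀ t₀ : ℝ} {d : ℝ → ℝ → ℝ}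
    (hspace : ContDiffAt ℝ 2 (fun x => d x t₀) x₀) (htime : DifferentiableAt ℝ (d x₀) t₀)
    (ht₀ : 0 < t₀) (hd : d x₀ t₀ < 0) (htouch : expBarrier m K A x₀ t₀ = d x₀ t₀)
    (hbelow_space : ∀ᶠ x in 𝓝 x₀, expBarrier m K A x t₀ ≤ d x t₀)
    (hbelow_time : ∀ t ∈ Icc 0 t₀, expBarrier m K A x₀ t ≤ d x₀ t)
    (ha : 0 ≤ a) (hK : 2 * A + 4 * A ^ 2 * x₀ ^ 2 + C < a * K) :
    a * deriv (d x₀) t₀ - C * d x₀ t₀ < deriv (deriv fun x => d x t₀) x₀ := by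
  have hvelocity : deriv (d x₀) t₀ ≤ K * d x₀ t₀ := by
    have hvar := sub_mul_le_sub_mul_of_touching (convex_Icc 0 t₀) (right_mem_Icc.2 ht₀.le)
      (left_mem_Icc.2 ht₀.le) htouch hbelow_time htime.hasDerivAt.hasDerivWithinAt
      (htouch ▸ hasDerivAt_expBarrier_time m K A x₀ t₀).hasDerivWithinAt
    nlinarith
  have hcurvature :
      (2 * A + 4 * A ^ 2 * x₀ ^ 2) * d x₀ t₀ ≤ deriv (deriv fun x => d x t₀) x₀ := by
    rw [← htouch, ← deriv_deriv_expBarrier_space]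
    exact deriv_deriv_le_of_touching hspace (contDiff_expBarrier_space m K A t₀).contDiffAt htouch
      hbelow_space
  have hdrift : a * deriv (d x₀) t₀ ≤ a * (K * d x₀ t₀) := mul_le_mul_of_nonneg_left hvelocity ha
  linarith [mul_lt_mul_of_neg_right hK hd]

/-- At a negative minimum of the quotient of `d` by `exp (K * t + A * x ^ 2)`, the lateral
inequalities fail because `B < 2 * A * l`, and the interior one fails because `K` is large. -/
lemma nonneg_of_robin_inequalities {l τ a₀ B C : ℝ} (hl : 0 < l) (ha₀ : 0 < a₀)
    {d a : ℝ → ℝ → ℝ}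
    (hcont : ContinuousOn (fun q : ℝ × ℝ => d q.1 q.2) (Icc (-l) l ×ˢ Icc 0 τ))
    (hspace : ∀ t ∈ Ioc 0 τ, ContDiffOn ℝ 2 (fun x => d x t) (Icc (-l) l))
    (htime : ∀ x ∈ Ioo (-l) l, ∀ t ∈ Ioc 0 τ, DifferentiableAt ℝ (d x) t)
    (ha : ∀ x ∈ Ioo (-l) l, ∀ t ∈ Ioc 0 τ, a₀ ≤ a x t)
    (hinit : ∀ x ∈ Icc (-l) l, 0 ≤ d x 0)
    (hinterior : ∀ x ∈ Ioo (-l) l, ∀ t ∈ Ioc 0 τ, d x t < 0 →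
      deriv (deriv fun y => d y t) x ≤ a x t * deriv (d x) t - C * d x t)
    (hright : ∀ t ∈ Ioc 0 τ, d l t < 0 →
      B * d l t ≤ derivWithin (fun y => d y t) (Icc (-l) l) l)
    (hleft : ∀ t ∈ Ioc 0 τ, d (-l) t < 0 →
      derivWithin (fun y => d y t) (Icc (-l) l) (-l) ≤ -(B * d (-l) t)) :
    ∀ x ∈ Icc (-l) l, ∀ t ∈ Icc 0 τ, 0 ≤ d x t := by
  by_contra! hneg
  obtain ⟨A, hA⟩ : ∃ A : ℝ, B < 2 * A * l := ⟨(B + 1) / (2 * l), by field_simp; linarith⟩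
  obtain ⟨K, hK₀, hK⟩ : ∃ K : ℝ, 0 ≤ K ∧ 2 * A + 4 * A ^ 2 * l ^ 2 + C < a₀ * K := by
    refine ⟨(|2 * A + 4 * A ^ 2 * l ^ 2 + C| + 1) / a₀, by positivity, ?_⟩
    rw [mul_div_cancel₀ _ ha₀.ne']
    linarith [le_abs_self (2 * A + 4 * A ^ 2 * l ^ 2 + C)]
  obtain ⟨m, x₀, hx₀, t₀, ht₀, hd, htouch, hbelow⟩ :=
    exists_expBarrier_touching hcont hinit hneg K A
  have ht₀' := Ioc_subset_Icc_self ht₀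
  have hslope : ∀ y ∈ Icc (-l) l, (y - x₀) * (2 * A * x₀ * d x₀ t₀) ≤
      (y - x₀) * derivWithin (fun x => d x t₀) (Icc (-l) l) x₀ := fun y hy =>
    sub_mul_le_sub_mul_of_touching (convex_Icc _ _) hx₀ hy htouch (fun x hx => hbelow x hx t₀ ht₀')
      ((hspace t₀ ht₀).differentiableOn two_ne_zero x₀ hx₀).hasDerivWithinAt
      (htouch ▸ hasDerivAt_expBarrier_space m K A x₀ t₀).hasDerivWithinAt
  have hflux : 2 * A * l * d x₀ t₀ < B * d x₀ t₀ := mul_lt_mul_of_neg_right hA hd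
  rcases eq_endpoints_or_mem_Ioo_of_mem_Icc hx₀ with rfl | rfl | hx₀'
  · nlinarith [hleft t₀ ht₀ hd, hslope l (right_mem_Icc.2 (by linarith))]
  · nlinarith [hright t₀ ht₀ hd, hslope (-x₀) (left_mem_Icc.2 (by linarith))]
  have hK' : 2 * A + 4 * A ^ 2 * x₀ ^ 2 + C < a x₀ t₀ * K :=
    calc 2 * A + 4 * A ^ 2 * x₀ ^ 2 + C ≤ 2 * A + 4 * A ^ 2 * l ^ 2 + C := by
          gcongr _ + _ * ?_ + _
          exact sq_le_sq' hx₀.1 hx₀.2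
      _ < a₀ * K := hK
      _ ≤ a x₀ t₀ * K := by gcongr; exact ha x₀ hx₀' t₀ ht₀
  have hnhds : Icc (-l) l ∈ 𝓝 x₀ := Icc_mem_nhds hx₀'.1 hx₀'.2
  exact (hinterior x₀ hx₀' t₀ ht₀ hd).not_gt <|
    deriv_deriv_gt_of_expBarrier_touching ((hspace t₀ ht₀).contDiffAt hnhds)
      (htime x₀ hx₀' t₀ ht₀) ht₀.1 hd htouch
      (Filter.mem_of_superset hnhds fun x hx => hbelow x hx t₀ ht₀')
      (fun t ht => hbelow x₀ hx₀ t ⟨ht.1, ht.2.trans ht₀.2⟩)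
      (ha₀.le.trans (ha x₀ hx₀' t₀ ht₀)) hK'

/-! ### Comparison -/

lemma mul_rpow_mul_log_sub_le_rpow_sub {a b M q : ℝ} (ha : 0 < a) (hab : a ≤ b) (hbM : b ≤ M)
    (hq : 0 ≤ q) : q * M ^ q * (log a - log b) ≤ a ^ q - b ^ q := by
  have hb : 0 < b := ha.trans_le hab
  have hlog : log a - log b ≤ 0 := sub_nonpos.2 (log_le_log ha hab)
  have htangent : b ^ q * ((log a - log b) * q + 1) ≤ a ^ q :=
    calc b ^ q * ((log a - log b) * q + 1) ≤ b ^ q * exp ((log a - log b) * q) := by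
          gcongr
          exact add_one_le_exp _
      _ = a ^ q := by
          rw [rpow_def_of_pos ha, rpow_def_of_pos hb, ← exp_add]
          ring_nf
  have hpow : M ^ q * ((log a - log b) * q) ≤ b ^ q * ((log a - log b) * q) :=
    mul_le_mul_of_nonpos_right (rpow_le_rpow hb.le hbM hq) (mul_nonpos_of_nonpos_of_nonneg hlog hq)
  linarith

lemma linearized_flux_le {γ p a b M : ℝ} (hγ : 0 ≤ γ) (hp : 1 ≤ p) (ha : 0 < a) (hab : a ≤ b)
    (hbM : b ≤ M) :
    2 * γ * ((p - 1) * M ^ (p - 1)) * (log a - log b) ≤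
      2 * γ * a ^ (p - 1) - 2 * γ * b ^ (p - 1) := by
  rw [mul_assoc, ← mul_sub]
  exact mul_le_mul_of_nonneg_left
    (mul_rpow_mul_log_sub_le_rpow_sub ha hab hbM (sub_nonneg.2 hp)) (by positivity)

lemma mul_div_sub_one_le_neg_mul_log_sub {a b c C : ℝ} (ha : 0 < a) (hab : a ≤ b) (hc : |c| ≤ C) :
    c * (a / b - 1) ≤ -(C * (log a - log b)) := by
  have hb : 0 < b := ha.trans_le hab
  have hlog : 1 - a / b ≤ log b - log a := by
    simpa [log_div hb.ne' ha.ne'] using one_sub_inv_le_log_of_pos (div_pos hb ha)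
  have hratio : 0 ≤ 1 - a / b := sub_nonneg.2 ((div_le_one hb).2 hab)
  calc c * (a / b - 1) = -c * (1 - a / b) := by ring
    _ ≤ C * (log b - log a) :=
        mul_le_mul ((neg_le_abs c).trans hc) hlog hratio ((abs_nonneg c).trans hc)
    _ = -(C * (log a - log b)) := by ring

/-- The regularity on `[-l,l] × [0,τ]` under which sub- and supersolutions are compared. No
differentiability at `t = 0` is asked for. -/
structure IsPosRegular (l τ : ℝ) (v : ℝ → ℝ → ℝ) : Prop where
  continuousOn : ContinuousOn (fun q : ℝ × ℝ => v q.1 q.2) (Icc (-l) l ×ˢ Icc 0 τ)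
  pos : ∀ x ∈ Icc (-l) l, ∀ t ∈ Icc 0 τ, 0 < v x t
  contDiffOn_slice : ∀ t ∈ Ioc 0 τ, ContDiffOn ℝ 2 (fun x => v x t) (Icc (-l) l)
  differentiableAt_time : ∀ x ∈ Ioo (-l) l, ∀ t ∈ Ioc 0 τ, DifferentiableAt ℝ (v x) t

/-- Subsolutions of `∂ₜw = ∂ₓₓ log w` on `[-l,l] × [0,τ]` whose outward flux is at most the one
prescribed by `∂ₓ log w = ±2γ w^(p-1)` at `±l`. The flux is the one-sided derivative. -/
structure IsLogDiffSubsol (l γ p τ : ℝ) (w : ℝ → ℝ → ℝ) : Prop extends IsPosRegular l τ w where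
  deriv_time_le : ∀ x ∈ Ioo (-l) l, ∀ t ∈ Ioc 0 τ,
    deriv (w x) t ≤ deriv (deriv fun y => log (w y t)) x
  flux_right_le : ∀ t ∈ Ioc 0 τ,
    derivWithin (fun y => log (w y t)) (Icc (-l) l) l ≤ 2 * γ * w l t ^ (p - 1)
  le_flux_left : ∀ t ∈ Ioc 0 τ,
    -(2 * γ * w (-l) t ^ (p - 1)) ≤ derivWithin (fun y => log (w y t)) (Icc (-l) l) (-l)

/-- Supersolutions: the inequalities of `IsLogDiffSubsol` reversed. -/
structure IsLogDiffSupersol (l γ p τ : ℝ) (v : ℝ → ℝ → ℝ) : Prop extends IsPosRegular l τ v where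
  le_deriv_time : ∀ x ∈ Ioo (-l) l, ∀ t ∈ Ioc 0 τ,
    deriv (deriv fun y => log (v y t)) x ≤ deriv (v x) t
  le_flux_right : ∀ t ∈ Ioc 0 τ,
    2 * γ * v l t ^ (p - 1) ≤ derivWithin (fun y => log (v y t)) (Icc (-l) l) l
  flux_left_le : ∀ t ∈ Ioc 0 τ,
    derivWithin (fun y => log (v y t)) (Icc (-l) l) (-l) ≤ -(2 * γ * v (-l) t ^ (p - 1))

lemma IsPosRegular.contDiffOn_log_slice {l τ t : ℝ} {v : ℝ → ℝ → ℝ} (hv : IsPosRegular l τ v)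
    (ht : t ∈ Ioc 0 τ) : ContDiffOn ℝ 2 (fun x => log (v x t)) (Icc (-l) l) :=
  (hv.contDiffOn_slice t ht).log fun x hx => (hv.pos x hx t (Ioc_subset_Icc_self ht)).ne'

section Comparison

variable {l γ p τ C : ℝ} {v w : ℝ → ℝ → ℝ}

lemma IsPosRegular.derivWithin_log_sub {x t : ℝ} (hv : IsPosRegular l τ v)
    (hw : IsPosRegular l τ w) (hx : x ∈ Icc (-l) l) (ht : t ∈ Ioc 0 τ) :
    derivWithin (fun y => log (v y t) - log (w y t)) (Icc (-l) l) x =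
      derivWithin (fun y => log (v y t)) (Icc (-l) l) x -
        derivWithin (fun y => log (w y t)) (Icc (-l) l) x :=
  derivWithin_fun_sub ((hv.contDiffOn_log_slice ht).differentiableOn two_ne_zero x hx)
    ((hw.contDiffOn_log_slice ht).differentiableOn two_ne_zero x hx)

lemma IsPosRegular.hasDerivAt_log_sub_time {x t : ℝ} (hv : IsPosRegular l τ v)
    (hw : IsPosRegular l τ w) (hx : x ∈ Ioo (-l) l) (ht : t ∈ Ioc 0 τ) :
    HasDerivAt (fun s => log (v x s) - log (w x s))
      (deriv (v x) t / v x t - deriv (w x) t / w x t) t := by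
  have hx' := Ioo_subset_Icc_self hx
  have ht' := Ioc_subset_Icc_self ht
  exact ((hv.differentiableAt_time x hx t ht).hasDerivAt.log (hv.pos x hx' t ht').ne').sub
    ((hw.differentiableAt_time x hx t ht).hasDerivAt.log (hw.pos x hx' t ht').ne')

lemma IsLogDiffSubsol.deriv_deriv_log_sub_le (hw : IsLogDiffSubsol l γ p τ w)
    (hv : IsLogDiffSupersol l γ p τ v) {x t : ℝ} (hx : x ∈ Ioo (-l) l) (ht : t ∈ Ioc 0 τ)
    (hC : |deriv (w x) t| ≤ C) (hle : v x t ≤ w x t) :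
    deriv (deriv fun y => log (v y t) - log (w y t)) x ≤
      v x t * deriv (fun s => log (v x s) - log (w x s)) t - C * (log (v x t) - log (w x t)) := by
  have hvpos := hv.pos x (Ioo_subset_Icc_self hx) t (Ioc_subset_Icc_self ht)
  have hnhds : Icc (-l) l ∈ 𝓝 x := Icc_mem_nhds hx.1 hx.2
  rw [deriv_deriv_sub ((hv.contDiffOn_log_slice ht).contDiffAt hnhds)
    ((hw.contDiffOn_log_slice ht).contDiffAt hnhds),
    (hv.hasDerivAt_log_sub_time hw.toIsPosRegular hx ht).deriv]
  calc deriv (deriv fun y => log (v y t)) x - deriv (deriv fun y => log (w y t)) x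
      ≤ deriv (v x) t - deriv (w x) t :=
        sub_le_sub (hv.le_deriv_time x hx t ht) (hw.deriv_time_le x hx t ht)
    _ = v x t * (deriv (v x) t / v x t - deriv (w x) t / w x t) +
          deriv (w x) t * (v x t / w x t - 1) := by
        field [hvpos.ne', (hvpos.trans_le hle).ne']
    _ ≤ _ := by linarith [mul_div_sub_one_le_neg_mul_log_sub hvpos hle hC]

theorem IsLogDiffSubsol.le_of_initial_le (hw : IsLogDiffSubsol l γ p τ w)
    (hv : IsLogDiffSupersol l γ p τ v) (hl : 0 < l) (hτ : 0 ≤ τ) (hγ : 0 ≤ γ) (hp : 1 ≤ p)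
    (hinit : ∀ x ∈ Icc (-l) l, w x 0 ≤ v x 0)
    (hC : ∀ x ∈ Ioo (-l) l, ∀ t ∈ Ioc 0 τ, |deriv (w x) t| ≤ C) :
    ∀ x ∈ Icc (-l) l, ∀ t ∈ Icc 0 τ, w x t ≤ v x t := by
  have hcompact : IsCompact (Icc (-l) l ×ˢ Icc 0 τ) := isCompact_Icc.prod isCompact_Icc
  obtain ⟨⟨x₀, t₀⟩, ⟨hx₀, ht₀⟩, hmin⟩ := hcompact.exists_isMinOn
    ⟨(0, 0), ⟨by linarith, hl.le⟩, le_rfl, hτ⟩ hv.continuousOn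
  obtain ⟨M, hM⟩ := hcompact.exists_bound_of_continuousOn hw.continuousOn
  have hlt : ∀ x ∈ Icc (-l) l, ∀ t ∈ Icc 0 τ, log (v x t) - log (w x t) < 0 → v x t ≤ w x t :=
    fun x hx t ht hneg =>
      (log_le_log_iff (hv.pos x hx t ht) (hw.pos x hx t ht)).1 (sub_neg.1 hneg).le
  have hflux : ∀ x ∈ Icc (-l) l, ∀ t ∈ Icc 0 τ, log (v x t) - log (w x t) < 0 →
      2 * γ * ((p - 1) * M ^ (p - 1)) * (log (v x t) - log (w x t)) ≤
        2 * γ * v x t ^ (p - 1) - 2 * γ * w x t ^ (p - 1) := fun x hx t ht hneg =>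
    linearized_flux_le hγ hp (hv.pos x hx t ht) (hlt x hx t ht hneg)
      ((le_abs_self _).trans (hM (x, t) ⟨hx, ht⟩))
  have hleft : -l ∈ Icc (-l) l := left_mem_Icc.2 (by linarith)
  have hright : l ∈ Icc (-l) l := right_mem_Icc.2 (by linarith)
  have hlog := nonneg_of_robin_inequalities (d := fun x t => log (v x t) - log (w x t)) (a := v)
    (B := 2 * γ * ((p - 1) * M ^ (p - 1))) (C := C) hl (hv.pos x₀ hx₀ t₀ ht₀)
    ((hv.continuousOn.log fun q hq => (hv.pos _ hq.1 _ hq.2).ne').sub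
      (hw.continuousOn.log fun q hq => (hw.pos _ hq.1 _ hq.2).ne'))
    (fun t ht => (hv.contDiffOn_log_slice ht).sub (hw.contDiffOn_log_slice ht))
    (fun x hx t ht => (hv.hasDerivAt_log_sub_time hw.toIsPosRegular hx ht).differentiableAt)
    (fun x hx t ht => hmin (show (x, t) ∈ Icc (-l) l ×ˢ Icc 0 τ from
      ⟨Ioo_subset_Icc_self hx, Ioc_subset_Icc_self ht⟩))
    (fun x hx => sub_nonneg.2 (log_le_log (hw.pos x hx 0 ⟨le_rfl, hτ⟩) (hinit x hx)))
    (fun x hx t ht hneg => hw.deriv_deriv_log_sub_le hv hx ht (hC x hx t ht)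
      (hlt x (Ioo_subset_Icc_self hx) t (Ioc_subset_Icc_self ht) hneg))
    (fun t ht hneg => by
      rw [hv.derivWithin_log_sub hw.toIsPosRegular hright ht]
      linarith [hflux l hright t (Ioc_subset_Icc_self ht) hneg, hw.flux_right_le t ht,
        hv.le_flux_right t ht])
    (fun t ht hneg => by
      rw [hv.derivWithin_log_sub hw.toIsPosRegular hleft ht]
      linarith [hflux (-l) hleft t (Ioc_subset_Icc_self ht) hneg, hw.le_flux_left t ht,
        hv.flux_left_le t ht])
  exact fun x hx t ht =>
    (log_le_log_iff (hw.pos x hx t ht) (hv.pos x hx t ht)).1 (sub_nonneg.1 (hlog x hx t ht))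

end Comparison

/-! ### Calculus -/

section PartialDerivatives

variable {f : ℝ × ℝ → ℝ} {s t : Set ℝ} {x y : ℝ}

lemma hasDerivWithinAt_snd (hf : DifferentiableOn ℝ f (s ×ˢ t)) (hx : x ∈ s) (hy : y ∈ t) :
    HasDerivWithinAt (fun y => f (x, y)) (fderivWithin ℝ f (s ×ˢ t) (x, y) (0, 1)) t y :=
  (hf (x, y) ⟨hx, hy⟩).hasFDerivWithinAt.comp_hasDerivWithinAt y
    ((hasDerivWithinAt_const y t x).prodMk (hasDerivWithinAt_id y t))
    fun _ hz => mk_mem_prod hx hz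

lemma hasDerivWithinAt_fst (hf : DifferentiableOn ℝ f (s ×ˢ t)) (hx : x ∈ s) (hy : y ∈ t) :
    HasDerivWithinAt (fun x => f (x, y)) (fderivWithin ℝ f (s ×ˢ t) (x, y) (1, 0)) s x :=
  (hf (x, y) ⟨hx, hy⟩).hasFDerivWithinAt.comp_hasDerivWithinAt x
    ((hasDerivWithinAt_id x s).prodMk (hasDerivWithinAt_const x s y))
    fun _ hz => mk_mem_prod hz hy

lemma continuousOn_derivWithin_snd (hf : ContDiffOn ℝ 1 f (s ×ˢ t)) (hs : UniqueDiffOn ℝ s)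
    (ht : UniqueDiffOn ℝ t) :
    ContinuousOn (fun q : ℝ × ℝ => derivWithin (fun y => f (q.1, y)) t q.2) (s ×ˢ t) :=
  ((hf.continuousOn_fderivWithin (hs.prod ht) le_rfl).clm_apply continuousOn_const).congr
    fun q hq => (hasDerivWithinAt_snd (hf.differentiableOn one_ne_zero) hq.1 hq.2).derivWithin
      (ht q.2 hq.2)

lemma continuousOn_derivWithin_fst (hf : ContDiffOn ℝ 1 f (s ×ˢ t)) (hs : UniqueDiffOn ℝ s)
    (ht : UniqueDiffOn ℝ t) :
    ContinuousOn (fun q : ℝ × ℝ => derivWithin (fun x => f (x, q.2)) s q.1) (s ×ˢ t) :=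
  ((hf.continuousOn_fderivWithin (hs.prod ht) le_rfl).clm_apply continuousOn_const).congr
    fun q hq => (hasDerivWithinAt_fst (hf.differentiableOn one_ne_zero) hq.1 hq.2).derivWithin
      (hs q.1 hq.1)

end PartialDerivatives

section ParametricIntegral

variable {a b : ℝ} {s : Set ℝ} {f : ℝ → ℝ → ℝ}

lemma continuousOn_intervalIntegral (hab : a ≤ b)
    (hf : ContinuousOn (fun q : ℝ × ℝ => f q.1 q.2) (Icc a b ×ˢ s)) :
    ContinuousOn (fun t => ∫ x in a..b, f x t) s := by
  rw [continuousOn_iff_continuous_domRestrict]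
  have hproj : Continuous (Function.uncurry fun (t : s) x => f (projIcc a b hab x) t) :=
    hf.comp_continuous (f := fun q : s × ℝ => ((projIcc a b hab q.2 : ℝ), (q.1 : ℝ))) (by fun_prop)
      fun q => ⟨(projIcc a b hab q.2).2, q.1.2⟩
  convert intervalIntegral.continuous_parametric_intervalIntegral_of_continuous'
    (μ := MeasureTheory.volume) hproj a b using 2 with t
  refine intervalIntegral.integral_congr fun x hx => ?_
  rw [uIcc_of_le hab] at hx
  simp [projIcc_of_mem hab hx]

lemma hasDerivAt_intervalIntegral (hab : a ≤ b) (hs : IsOpen s)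
    (hf : ContinuousOn (fun q : ℝ × ℝ => f q.1 q.2) (Icc a b ×ˢ s))
    (hdiff : ∀ x ∈ Icc a b, DifferentiableOn ℝ (f x) s)
    (hderiv : ContinuousOn (fun q : ℝ × ℝ => deriv (f q.1) q.2) (Icc a b ×ˢ s))
    {t : ℝ} (ht : t ∈ s) :
    HasDerivAt (fun t => ∫ x in a..b, f x t) (∫ x in a..b, deriv (f x) t) t := by
  obtain ⟨K, hK, htK, hKs⟩ := exists_compact_subset hs ht
  obtain ⟨M, hM⟩ := (isCompact_Icc.prod hK).exists_bound_of_continuousOn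
    (hderiv.mono (prod_mono_right hKs))
  have hslice : ∀ {g : ℝ × ℝ → ℝ}, ContinuousOn g (Icc a b ×ˢ s) → ∀ r ∈ s,
      ContinuousOn (fun x => g (x, r)) (Icc a b) := fun hg r hr =>
    hg.comp (by fun_prop) fun x hx => ⟨hx, hr⟩
  have hIoc : uIoc a b ⊆ Icc a b := uIoc_of_le hab ▸ Ioc_subset_Icc_self
  have hnhds : K ∈ 𝓝 t := mem_interior_iff_mem_nhds.1 htK
  refine (intervalIntegral.hasDerivAt_integral_of_dominated_loc_of_deriv_le
    (F := fun t x => f x t) (F' := fun t x => deriv (f x) t) (bound := fun _ => M) hnhds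
    ?_ ((hslice hf t ht).intervalIntegrable_of_Icc hab)
    (((hslice hderiv t ht).mono hIoc).aestronglyMeasurable measurableSet_uIoc)
    (.of_forall fun x hx r hr => hM (x, r) ⟨hIoc hx, hr⟩) intervalIntegrable_const
    (.of_forall fun x hx r hr =>
      ((hdiff x (hIoc hx)).differentiableAt (hs.mem_nhds (hKs hr))).hasDerivAt)).2
  filter_upwards [hs.mem_nhds ht] with r hr
  exact ((hslice hf r hr).mono hIoc).aestronglyMeasurable measurableSet_uIoc

end ParametricIntegral

lemma deriv_derivWithin_Icc_eq {a b x : ℝ} {g : ℝ → ℝ} (hx : x ∈ Ioo a b) :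
    deriv (derivWithin g (Icc a b)) x = deriv (deriv g) x := by
  refine Filter.EventuallyEq.deriv_eq ?_
  filter_upwards [Ioo_mem_nhds hx.1 hx.2] with y hy
    using derivWithin_of_mem_nhds (Icc_mem_nhds hy.1 hy.2)

section SecondDerivative

variable {a b : ℝ} {f g : ℝ → ℝ}

lemma integral_deriv_deriv_of_contDiffOn_Icc (hab : a < b) (hg : ContDiffOn ℝ 2 g (Icc a b)) :
    ∫ x in a..b, deriv (deriv g) x =
      derivWithin g (Icc a b) b - derivWithin g (Icc a b) a := by
  rw [← intervalIntegral.integral_deriv_of_contDiffOn_Icc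
    (hg.derivWithin (uniqueDiffOn_Icc hab) (by norm_num)) hab.le]
  exact intervalIntegral.integral_congr_Ioo_of_le hab.le fun x hx =>
    (deriv_derivWithin_Icc_eq hx).symm

lemma convexOn_Icc_of_deriv_deriv_nonneg (hg : ContDiffOn ℝ 2 g (Icc a b))
    (hconvex : ∀ x ∈ Ioo a b, 0 ≤ deriv (deriv g) x) : ConvexOn ℝ (Icc a b) g := by
  have hdiff : ∀ x ∈ Ioo a b, DifferentiableAt ℝ (deriv g) x := fun x hx =>
    ((hg.contDiffAt (Icc_mem_nhds hx.1 hx.2)).derivWithin (m := 1)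
      (by norm_num)).differentiableAt one_ne_zero
  refine convexOn_of_deriv2_nonneg (convex_Icc a b) hg.continuousOn ?_ ?_ ?_ <;>
    rw [interior_Icc]
  · exact (hg.differentiableOn two_ne_zero).mono Ioo_subset_Icc_self
  · exact fun x hx => (hdiff x hx).differentiableWithinAt
  · exact hconvex

lemma le_max_endpoints_of_convexOn_log (hpos : ∀ x ∈ Icc a b, 0 < f x)
    (hconvex : ConvexOn ℝ (Icc a b) fun x => log (f x)) {x : ℝ} (hx : x ∈ Icc a b) :
    f x ≤ max (f a) (f b) := by
  have hab := hx.1.trans hx.2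
  have ha := left_mem_Icc.2 hab
  have hb := right_mem_Icc.2 hab
  rw [le_max_iff, ← log_le_log_iff (hpos x hx) (hpos a ha),
    ← log_le_log_iff (hpos x hx) (hpos b hb), ← le_max_iff]
  exact hconvex.le_max_of_mem_Icc ha hb hx

lemma average_rpow_le_of_le_max_endpoints {q : ℝ} (hab : a < b) (hq : 0 ≤ q)
    (hf : ContinuousOn f (Icc a b)) (hpos : ∀ x ∈ Icc a b, 0 ≤ f x)
    (hmax : ∀ x ∈ Icc a b, f x ≤ max (f a) (f b)) :
    ((∫ x in a..b, f x) / (b - a)) ^ q ≤ f b ^ q + f a ^ q := by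
  have hlen : 0 < b - a := sub_pos.2 hab
  have hmean : (∫ x in a..b, f x) / (b - a) ≤ max (f a) (f b) := by
    rw [div_le_iff₀' hlen]
    simpa using intervalIntegral.integral_mono_on
      (μ := MeasureTheory.volume) hab.le (hf.intervalIntegrable_of_Icc hab.le)
      intervalIntegrable_const hmax
  have ha : 0 ≤ f a ^ q := rpow_nonneg (hpos a (left_mem_Icc.2 hab.le)) q
  have hb : 0 ≤ f b ^ q := rpow_nonneg (hpos b (right_mem_Icc.2 hab.le)) q
  calc ((∫ x in a..b, f x) / (b - a)) ^ q ≤ max (f a) (f b) ^ q :=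
        rpow_le_rpow (div_nonneg (intervalIntegral.integral_nonneg hab.le hpos) hlen.le) hmean hq
    _ ≤ f b ^ q + f a ^ q := by
        rcases max_choice (f a) (f b) with h | h <;> rw [h] <;> linarith

end SecondDerivative

lemma rpow_one_sub_le_of_mul_rpow_le_deriv {m : ℝ → ℝ} {c q T : ℝ} (hq : 1 ≤ q)
    (hcont : ContinuousOn m (Ico 0 T)) (hpos : ∀ t ∈ Ico 0 T, 0 < m t)
    (hdiff : ∀ t ∈ Ioo 0 T, DifferentiableAt ℝ m t)
    (hderiv : ∀ t ∈ Ioo 0 T, c * m t ^ q ≤ deriv m t) {t : ℝ} (ht : t ∈ Ico 0 T) :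
    m t ^ (1 - q) ≤ m 0 ^ (1 - q) + (1 - q) * c * t := by
  have hpow : ∀ s ∈ Ioo 0 T,
      HasDerivAt (fun s => m s ^ (1 - q)) (deriv m s * (1 - q) * m s ^ (1 - q - 1)) s := fun s hs =>
    (hdiff s hs).hasDerivAt.rpow_const (.inl (hpos s (Ioo_subset_Ico_self hs)).ne')
  have hslope := (convex_Ico 0 T).image_sub_le_mul_sub_of_deriv_le (C := (1 - q) * c)
    (hcont.rpow_const (p := 1 - q) fun s hs => .inl (hpos s hs).ne')
    (interior_Ico (a := (0 : ℝ)) ▸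
      fun s hs => (hpow s hs).differentiableAt.differentiableWithinAt) ?_
    0 ⟨le_rfl, ht.1.trans_lt ht.2⟩ t ht ht.1
  · linarith
  rw [interior_Ico]
  intro s hs
  have hms := hpos s (Ioo_subset_Ico_self hs)
  rw [(hpow s hs).deriv]
  calc deriv m s * (1 - q) * m s ^ (1 - q - 1)
      = (1 - q) * (deriv m s / m s ^ q) := by
        rw [show 1 - q - 1 = -q by ring, rpow_neg hms.le]
        ring
    _ ≤ (1 - q) * c :=
        mul_le_mul_of_nonpos_left ((le_div_iff₀ (rpow_pos_of_pos hms q)).2 (hderiv s hs))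
          (sub_nonpos.2 hq)

lemma le_div_neg_of_pos_on_Ico {F β T : ℝ} (hβ : β < 0) (hF : 0 ≤ F)
    (hpos : ∀ t ∈ Ico 0 T, 0 < F + β * t) : T ≤ F / -β := by
  by_contra! hT
  have hzero := hpos (F / -β) ⟨div_nonneg hF (neg_nonneg.2 hβ.le), hT⟩
  rw [div_neg, mul_neg, mul_div_cancel₀ F hβ.ne] at hzero
  linarith

/-! ### Monotonicity in time -/

namespace IsLogDiffSol

variable {l γ p T τ h x t : ℝ} {u₀ : ℝ → ℝ} {u : ℝ → ℝ → ℝ}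

lemma contDiffOn (hu : IsLogDiffSol l γ p T u₀ u) :
    ContDiffOn ℝ 2 (fun q : ℝ × ℝ => u q.1 q.2) (Icc (-l) l ×ˢ Ico 0 T) :=
  hu.1

lemma pos (hu : IsLogDiffSol l γ p T u₀ u) (hx : x ∈ Icc (-l) l) (ht : t ∈ Ico 0 T) : 0 < u x t :=
  hu.2.1 x hx t ht

lemma deriv_time_eq (hu : IsLogDiffSol l γ p T u₀ u) (hx : x ∈ Icc (-l) l) (ht : t ∈ Ioo 0 T) :
    deriv (u x) t = deriv (deriv fun y => log (u y t)) x :=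
  hu.2.2.1 x hx t ht

lemma eq_initial (hu : IsLogDiffSol l γ p T u₀ u) (hx : x ∈ Icc (-l) l) : u x 0 = u₀ x :=
  hu.2.2.2.2.2 x hx

lemma contDiffOn_slice (hu : IsLogDiffSol l γ p T u₀ u) (ht : t ∈ Ico 0 T) :
    ContDiffOn ℝ 2 (fun x => u x t) (Icc (-l) l) :=
  hu.contDiffOn.comp (f := fun x => (x, t)) (by fun_prop) fun _ hx => ⟨hx, ht⟩

lemma contDiffOn_log_slice (hu : IsLogDiffSol l γ p T u₀ u) (ht : t ∈ Ico 0 T) :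
    ContDiffOn ℝ 2 (fun x => log (u x t)) (Icc (-l) l) :=
  (hu.contDiffOn_slice ht).log fun _ hx => (hu.pos hx ht).ne'

lemma differentiableAt_time (hu : IsLogDiffSol l γ p T u₀ u) (hx : x ∈ Icc (-l) l)
    (ht : t ∈ Ioo 0 T) : DifferentiableAt ℝ (u x) t :=
  (hasDerivWithinAt_snd (hu.contDiffOn.differentiableOn two_ne_zero) hx
    (Ioo_subset_Ico_self ht)).differentiableWithinAt.differentiableAt (Ico_mem_nhds ht.1 ht.2)

lemma continuousOn_derivWithin_time (hu : IsLogDiffSol l γ p T u₀ u) (hl : 0 < l) :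
    ContinuousOn (fun q : ℝ × ℝ => derivWithin (u q.1) (Ico 0 T) q.2)
      (Icc (-l) l ×ˢ Ico 0 T) :=
  continuousOn_derivWithin_snd (hu.contDiffOn.of_le one_le_two) (uniqueDiffOn_Icc (by linarith))
    (uniqueDiffOn_Ico 0 T)

lemma exists_abs_deriv_time_le (hu : IsLogDiffSol l γ p T u₀ u) (hl : 0 < l) (hτ : τ < T) :
    ∃ C, ∀ x ∈ Ioo (-l) l, ∀ t ∈ Ioc 0 τ, |deriv (u x) t| ≤ C := by
  have hcompact : IsCompact (Icc (-l) l ×ˢ Icc 0 τ) := isCompact_Icc.prod isCompact_Icc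
  obtain ⟨C, hC⟩ := hcompact.exists_bound_of_continuousOn
    ((hu.continuousOn_derivWithin_time hl).mono (prod_mono_right (Icc_subset_Ico_right hτ)))
  refine ⟨C, fun x hx t ht => ?_⟩
  rw [← derivWithin_of_mem_nhds (Ico_mem_nhds ht.1 (ht.2.trans_lt hτ))]
  exact hC (x, t) ⟨Ioo_subset_Icc_self hx, Ioc_subset_Icc_self ht⟩

/-- The nonzero boundary data make the two-sided derivative in the boundary condition genuine, so
that it is also the one-sided derivative; continuity then extends the condition to `t = 0`. -/
lemma derivWithin_slice_eq_of_deriv_eq (hu : IsLogDiffSol l γ p T u₀ u) (hl : 0 < l)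
    (hx : x ∈ Icc (-l) l) {c : ℝ} (hc : c ≠ 0)
    (hbdry : ∀ t ∈ Ioo 0 T, deriv (fun y => u y t) x = c * u x t ^ p) (ht : t ∈ Ico 0 T) :
    derivWithin (fun y => u y t) (Icc (-l) l) x = c * u x t ^ p := by
  have huniq : UniqueDiffOn ℝ (Icc (-l) l) := uniqueDiffOn_Icc (by linarith)
  have hIoo : EqOn (fun t => derivWithin (fun y => u y t) (Icc (-l) l) x)
      (fun t => c * u x t ^ p) (Ioo 0 T) := fun t ht => by
    have hne : deriv (fun y => u y t) x ≠ 0 := by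
      rw [hbdry t ht]
      exact mul_ne_zero hc (rpow_pos_of_pos (hu.pos hx (Ioo_subset_Ico_self ht)) p).ne'
    exact ((differentiableAt_of_deriv_ne_zero hne).derivWithin (huniq x hx)).trans (hbdry t ht)
  have hmaps : MapsTo (Prod.mk x) (Ico 0 T) (Icc (-l) l ×ˢ Ico 0 T) := fun _ hs => ⟨hx, hs⟩
  refine hIoo.of_subset_closure ?_ ?_ Ioo_subset_Ico_self ?_ ht
  · exact (continuousOn_derivWithin_fst (hu.contDiffOn.of_le one_le_two) huniq
      (uniqueDiffOn_Ico 0 T)).comp (by fun_prop) hmaps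
  · exact continuousOn_const.mul ((hu.contDiffOn.continuousOn.comp (by fun_prop) hmaps).rpow_const
      fun s hs => .inl (hu.pos hx hs).ne')
  · rw [closure_Ioo (ht.1.trans_lt ht.2).ne]
    exact Ico_subset_Icc_self

lemma derivWithin_log_slice_eq_of_deriv_eq (hu : IsLogDiffSol l γ p T u₀ u) (hl : 0 < l)
    (hx : x ∈ Icc (-l) l) {c : ℝ} (hc : c ≠ 0)
    (hbdry : ∀ t ∈ Ioo 0 T, deriv (fun y => u y t) x = c * u x t ^ p) (ht : t ∈ Ico 0 T) :
    derivWithin (fun y => log (u y t)) (Icc (-l) l) x = c * u x t ^ (p - 1) := by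
  have hne := (hu.pos hx ht).ne'
  rw [derivWithin.log ((hu.contDiffOn_slice ht).differentiableOn two_ne_zero x hx) hne
    (uniqueDiffOn_Icc (by linarith) x hx), hu.derivWithin_slice_eq_of_deriv_eq hl hx hc hbdry ht,
    rpow_sub_one hne, mul_div_assoc]

lemma flux_right (hu : IsLogDiffSol l γ p T u₀ u) (hl : 0 < l) (hγ : 0 < γ) (ht : t ∈ Ico 0 T) :
    derivWithin (fun y => log (u y t)) (Icc (-l) l) l = 2 * γ * u l t ^ (p - 1) :=
  hu.derivWithin_log_slice_eq_of_deriv_eq hl (right_mem_Icc.2 (by linarith)) (by positivity)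
    hu.2.2.2.1 ht

lemma flux_left (hu : IsLogDiffSol l γ p T u₀ u) (hl : 0 < l) (hγ : 0 < γ) (ht : t ∈ Ico 0 T) :
    derivWithin (fun y => log (u y t)) (Icc (-l) l) (-l) = -(2 * γ * u (-l) t ^ (p - 1)) := by
  rw [hu.derivWithin_log_slice_eq_of_deriv_eq hl (left_mem_Icc.2 (by linarith))
    (neg_ne_zero.2 (by positivity : 2 * γ ≠ 0))
    (fun t ht => (hu.2.2.2.2.1 t ht).trans (neg_mul _ _).symm) ht, neg_mul]

lemma shift (hu : IsLogDiffSol l γ p T u₀ u) (hh : 0 ≤ h) :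
    IsLogDiffSol l γ p (T - h) (fun x => u x h) fun x t => u x (t + h) := by
  have hIco : ∀ t ∈ Ico 0 (T - h), t + h ∈ Ico 0 T := fun t ht =>
    ⟨add_nonneg ht.1 hh, lt_sub_iff_add_lt.1 ht.2⟩
  have hIoo : ∀ t ∈ Ioo 0 (T - h), t + h ∈ Ioo 0 T := fun t ht =>
    ⟨add_pos_of_pos_of_nonneg ht.1 hh, lt_sub_iff_add_lt.1 ht.2⟩
  refine ⟨hu.contDiffOn.comp (f := fun q : ℝ × ℝ => (q.1, q.2 + h)) (by fun_prop)
      fun q hq => ⟨hq.1, hIco _ hq.2⟩,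
    fun x hx t ht => hu.pos hx (hIco t ht), fun x hx t ht => ?_,
    fun t ht => hu.2.2.2.1 _ (hIoo t ht), fun t ht => hu.2.2.2.2.1 _ (hIoo t ht),
    fun x _ => by simp only [zero_add]⟩
  rw [deriv_comp_add_const]
  exact hu.deriv_time_eq hx (hIoo t ht)

lemma isPosRegular (hu : IsLogDiffSol l γ p T u₀ u) (hτ : τ < T) : IsPosRegular l τ u where
  continuousOn := hu.contDiffOn.continuousOn.mono (prod_mono_right (Icc_subset_Ico_right hτ))
  pos _ hx _ ht := hu.pos hx (Icc_subset_Ico_right hτ ht)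
  contDiffOn_slice _ ht := hu.contDiffOn_slice ⟨ht.1.le, ht.2.trans_lt hτ⟩
  differentiableAt_time _ hx _ ht :=
    hu.differentiableAt_time (Ioo_subset_Icc_self hx) ⟨ht.1, ht.2.trans_lt hτ⟩

lemma isLogDiffSubsol (hu : IsLogDiffSol l γ p T u₀ u) (hl : 0 < l) (hγ : 0 < γ) (hτ : τ < T) :
    IsLogDiffSubsol l γ p τ u where
  toIsPosRegular := hu.isPosRegular hτ
  deriv_time_le _ hx _ ht :=
    (hu.deriv_time_eq (Ioo_subset_Icc_self hx) ⟨ht.1, ht.2.trans_lt hτ⟩).le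
  flux_right_le _ ht := (hu.flux_right hl hγ ⟨ht.1.le, ht.2.trans_lt hτ⟩).le
  le_flux_left _ ht := (hu.flux_left hl hγ ⟨ht.1.le, ht.2.trans_lt hτ⟩).ge

lemma isLogDiffSupersol (hu : IsLogDiffSol l γ p T u₀ u) (hl : 0 < l) (hγ : 0 < γ) (hτ : τ < T) :
    IsLogDiffSupersol l γ p τ u where
  toIsPosRegular := hu.isPosRegular hτ
  le_deriv_time _ hx _ ht :=
    (hu.deriv_time_eq (Ioo_subset_Icc_self hx) ⟨ht.1, ht.2.trans_lt hτ⟩).ge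
  le_flux_right _ ht := (hu.flux_right hl hγ ⟨ht.1.le, ht.2.trans_lt hτ⟩).ge
  flux_left_le _ ht := (hu.flux_left hl hγ ⟨ht.1.le, ht.2.trans_lt hτ⟩).le

lemma isLogDiffSubsol_initial (hu : IsLogDiffSol l γ p T u₀ u) (hl : 0 < l) (hγ : 0 < γ)
    (hT : 0 < T) (hconvex : ∀ x ∈ Ioo (-l) l, 0 ≤ deriv (deriv fun y => log (u y 0)) x) :
    IsLogDiffSubsol l γ p τ fun x _ => u x 0 where
  continuousOn := (hu.contDiffOn_slice ⟨le_rfl, hT⟩).continuousOn.comp continuousOn_fst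
    fun _ hq => hq.1
  pos _ hx _ _ := hu.pos hx ⟨le_rfl, hT⟩
  contDiffOn_slice _ _ := hu.contDiffOn_slice ⟨le_rfl, hT⟩
  differentiableAt_time _ _ _ _ := differentiableAt_const _
  deriv_time_le x hx _ _ := by simpa using hconvex x hx
  flux_right_le _ _ := (hu.flux_right hl hγ ⟨le_rfl, hT⟩).le
  le_flux_left _ _ := (hu.flux_left hl hγ ⟨le_rfl, hT⟩).ge

lemma initial_le (hu : IsLogDiffSol l γ p T u₀ u) (hl : 0 < l) (hγ : 0 < γ) (hp : 1 ≤ p)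
    (hconvex : ∀ x ∈ Ioo (-l) l, 0 ≤ deriv (deriv fun y => log (u y 0)) x)
    (hx : x ∈ Icc (-l) l) (ht : t ∈ Ico 0 T) : u x 0 ≤ u x t :=
  (hu.isLogDiffSubsol_initial hl hγ (ht.1.trans_lt ht.2) hconvex).le_of_initial_le (C := 0)
    (hu.isLogDiffSupersol hl hγ ht.2) hl ht.1 hγ.le hp (fun _ _ => le_rfl) (by simp) x hx t
    ⟨ht.1, le_rfl⟩

lemma monotoneOn_time (hu : IsLogDiffSol l γ p T u₀ u) (hl : 0 < l) (hγ : 0 < γ) (hp : 1 ≤ p)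
    (hconvex : ∀ x ∈ Ioo (-l) l, 0 ≤ deriv (deriv fun y => log (u y 0)) x)
    (hx : x ∈ Icc (-l) l) : MonotoneOn (u x) (Ico 0 T) := by
  intro r hr s hs hrs
  have hh : 0 ≤ s - r := sub_nonneg.2 hrs
  obtain ⟨C, hC⟩ := hu.exists_abs_deriv_time_le hl hr.2
  have hle := (hu.isLogDiffSubsol hl hγ hr.2).le_of_initial_le
    ((hu.shift hh).isLogDiffSupersol hl hγ (by linarith [hs.2])) hl hr.1 hγ.le hp
    (fun y hy => hu.initial_le hl hγ hp hconvex hy ⟨by linarith, by linarith [hr.1, hs.2]⟩)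
    hC x hx r ⟨hr.1, le_rfl⟩
  rwa [add_sub_cancel] at hle

lemma deriv_deriv_log_nonneg (hu : IsLogDiffSol l γ p T u₀ u) (hl : 0 < l) (hγ : 0 < γ)
    (hp : 1 ≤ p) (hconvex : ∀ x ∈ Ioo (-l) l, 0 ≤ deriv (deriv fun y => log (u y 0)) x)
    (hx : x ∈ Icc (-l) l) (ht : t ∈ Ioo 0 T) : 0 ≤ deriv (deriv fun y => log (u y t)) x := by
  rw [← hu.deriv_time_eq hx ht, ← derivWithin_of_mem_nhds (Ico_mem_nhds ht.1 ht.2)]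
  exact (hu.monotoneOn_time hl hγ hp hconvex hx).derivWithin_nonneg

lemma le_max_boundary (hu : IsLogDiffSol l γ p T u₀ u) (hl : 0 < l) (hγ : 0 < γ)
    (hp : 1 ≤ p) (hconvex : ∀ x ∈ Ioo (-l) l, 0 ≤ deriv (deriv fun y => log (u y 0)) x)
    (ht : t ∈ Ioo 0 T) (hx : x ∈ Icc (-l) l) : u x t ≤ max (u (-l) t) (u l t) := by
  have ht' := Ioo_subset_Ico_self ht
  exact le_max_endpoints_of_convexOn_log (f := fun y => u y t) (fun y hy => hu.pos hy ht')
    (convexOn_Icc_of_deriv_deriv_nonneg (hu.contDiffOn_log_slice ht') fun y hy =>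
      hu.deriv_deriv_log_nonneg hl hγ hp hconvex (Ioo_subset_Icc_self hy) ht) hx

end IsLogDiffSol

/-! ### Mass -/

/-- The mass `m(t) = ∫_{-l}^{l} u(x,t) dx`. -/
noncomputable def mass (l : ℝ) (u : ℝ → ℝ → ℝ) (t : ℝ) : ℝ :=
  ∫ x in (-l)..l, u x t

namespace IsLogDiffSol

variable {l γ p T t : ℝ} {u₀ : ℝ → ℝ} {u : ℝ → ℝ → ℝ}

lemma mass_zero (hu : IsLogDiffSol l γ p T u₀ u) (hl : 0 < l) :
    mass l u 0 = ∫ x in (-l)..l, u₀ x :=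
  intervalIntegral.integral_congr fun x hx => hu.eq_initial <| by
    rwa [uIcc_of_le (by linarith)] at hx

lemma mass_pos (hu : IsLogDiffSol l γ p T u₀ u) (hl : 0 < l) (ht : t ∈ Ico 0 T) :
    0 < mass l u t :=
  intervalIntegral.intervalIntegral_pos_of_pos_on
    ((hu.contDiffOn_slice ht).continuousOn.intervalIntegrable_of_Icc (by linarith))
    (fun _ hx => hu.pos (Ioo_subset_Icc_self hx) ht) (by linarith)

lemma continuousOn_mass (hu : IsLogDiffSol l γ p T u₀ u) (hl : 0 < l) :
    ContinuousOn (mass l u) (Ico 0 T) :=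
  continuousOn_intervalIntegral (by linarith) hu.contDiffOn.continuousOn

lemma hasDerivAt_mass (hu : IsLogDiffSol l γ p T u₀ u) (hl : 0 < l) (hγ : 0 < γ)
    (ht : t ∈ Ioo 0 T) :
    HasDerivAt (mass l u) (2 * γ * (u l t ^ (p - 1) + u (-l) t ^ (p - 1))) t := by
  have hll : -l < l := by linarith
  have ht' := Ioo_subset_Ico_self ht
  have hderiv : ContinuousOn (fun q : ℝ × ℝ => deriv (u q.1) q.2) (Icc (-l) l ×ˢ Ioo 0 T) :=
    ((hu.continuousOn_derivWithin_time hl).mono (prod_mono_right Ioo_subset_Ico_self)).congr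
      fun q hq => (derivWithin_of_mem_nhds (Ico_mem_nhds hq.2.1 hq.2.2)).symm
  refine (hasDerivAt_intervalIntegral hll.le isOpen_Ioo
    (hu.contDiffOn.continuousOn.mono (prod_mono_right Ioo_subset_Ico_self))
    (fun x hx s hs => (hu.differentiableAt_time hx hs).differentiableWithinAt)
    hderiv ht).congr_deriv ?_
  calc ∫ x in (-l)..l, deriv (u x) t
      = ∫ x in (-l)..l, deriv (deriv fun y => log (u y t)) x :=
        intervalIntegral.integral_congr_Ioo_of_le hll.le fun x hx =>
          hu.deriv_time_eq (Ioo_subset_Icc_self hx) ht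
    _ = 2 * γ * (u l t ^ (p - 1) + u (-l) t ^ (p - 1)) := by
        rw [integral_deriv_deriv_of_contDiffOn_Icc hll (hu.contDiffOn_log_slice ht'),
          hu.flux_right hl hγ ht', hu.flux_left hl hγ ht']
        ring

lemma mul_mass_rpow_le_deriv_mass (hu : IsLogDiffSol l γ p T u₀ u) (hl : 0 < l) (hγ : 0 < γ)
    (hp : 1 ≤ p) (hconvex : ∀ x ∈ Ioo (-l) l, 0 ≤ deriv (deriv fun y => log (u y 0)) x)
    (ht : t ∈ Ioo 0 T) :
    2 * γ / (2 * l) ^ (p - 1) * mass l u t ^ (p - 1) ≤ deriv (mass l u) t := by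
  have ht' := Ioo_subset_Ico_self ht
  have haverage := average_rpow_le_of_le_max_endpoints (f := fun x => u x t) (by linarith)
    (sub_nonneg.2 hp) (hu.contDiffOn_slice ht').continuousOn (fun x hx => (hu.pos hx ht').le)
    fun x hx => hu.le_max_boundary hl hγ hp hconvex ht hx
  rw [(hu.hasDerivAt_mass hl hγ ht).deriv, div_mul_eq_mul_div, mul_div_assoc,
    ← div_rpow (hu.mass_pos hl ht').le (by positivity), two_mul l, ← sub_neg_eq_add]
  exact mul_le_mul_of_nonneg_left haverage (by positivity)

lemma mass_rpow_two_sub_le (hu : IsLogDiffSol l γ p T u₀ u) (hl : 0 < l) (hγ : 0 < γ)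
    (hp : 2 ≤ p) (hconvex : ∀ x ∈ Ioo (-l) l, 0 ≤ deriv (deriv fun y => log (u y 0)) x)
    (ht : t ∈ Ico 0 T) :
    mass l u t ^ (2 - p) ≤
      mass l u 0 ^ (2 - p) + 2 * (2 - p) * γ / (2 * l) ^ (p - 1) * t := by
  have hcompare := rpow_one_sub_le_of_mul_rpow_le_deriv (q := p - 1) (by linarith)
    (hu.continuousOn_mass hl) (fun s hs => hu.mass_pos hl hs)
    (fun s hs => (hu.hasDerivAt_mass hl hγ hs).differentiableAt)
    (fun s hs => hu.mul_mass_rpow_le_deriv_mass hl hγ (by linarith) hconvex hs) ht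
  rw [show 1 - (p - 1) = 2 - p by ring] at hcompare
  exact hcompare.trans_eq (by ring)

end IsLogDiffSol

theorem finite_time_blowup_p_gt_two_general
    {l γ p T : ℝ} (hl : 0 < l) (hγ : 0 < γ) (hp : 2 < p) {u₀ : ℝ → ℝ}
    (hu₀pos : ∀ x ∈ Icc (-l) l, 0 < u₀ x)
    (hconvex : ∀ x ∈ Ioo (-l) l, 0 ≤ deriv (deriv fun y => log (u₀ y)) x)
    {u : ℝ → ℝ → ℝ} (hu : IsLogDiffSol l γ p T u₀ u) :
    (∀ t ∈ Ico (0:ℝ) T,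
      1 / ((∫ x in (-l)..l, u₀ x) ^ (2 - p) + (2 * (2 - p) * γ / (2 * l) ^ (p - 1)) * t) ≤
        (∫ x in (-l)..l, u x t) ^ (p - 2)) ∧
    T ≤ (∫ x in (-l)..l, u₀ x) ^ (2 - p) / (-(2 * (2 - p) * γ / (2 * l) ^ (p - 1))) := by
  have hconvex' : ∀ x ∈ Ioo (-l) l, 0 ≤ deriv (deriv fun y => log (u y 0)) x := fun x hx => by
    have heq : (fun y => log (u y 0)) =ᶠ[𝓝 x] fun y => log (u₀ y) := by
      filter_upwards [Icc_mem_nhds hx.1 hx.2] with y hy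
      rw [hu.eq_initial hy]
    exact heq.deriv.deriv_eq ▸ hconvex x hx
  have hβ : 2 * (2 - p) * γ / (2 * l) ^ (p - 1) < 0 :=
    div_neg_of_neg_of_pos (by nlinarith) (by positivity)
  have hpos : ∀ t ∈ Ico 0 T, 0 < mass l u t ^ (2 - p) := fun t ht =>
    rpow_pos_of_pos (hu.mass_pos hl ht) _
  have hdecay : ∀ t ∈ Ico 0 T, mass l u t ^ (2 - p) ≤
      (∫ x in (-l)..l, u₀ x) ^ (2 - p) + 2 * (2 - p) * γ / (2 * l) ^ (p - 1) * t := fun t ht =>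
    hu.mass_zero hl ▸ hu.mass_rpow_two_sub_le hl hγ hp.le hconvex' ht
  refine ⟨fun t ht => (one_div_le_one_div_of_le (hpos t ht) (hdecay t ht)).trans_eq ?_,
    le_div_neg_of_pos_on_Ico hβ ?_ fun t ht => (hpos t ht).trans_le (hdecay t ht)⟩
  · rw [one_div, ← rpow_neg (hu.mass_pos hl ht).le, neg_sub, mass]
  · exact rpow_nonneg (intervalIntegral.integral_nonneg (by linarith) fun x hx =>
      (hu₀pos x hx).le) _

theorem finite_time_blowup_p_gt_two
    (l γ p T : ℝ) (hl : 0 < l) (hγ : 0 < γ) (hp : 2 < p) (u₀ : ℝ → ℝ)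
    (hu₀smooth : ContDiffOn ℝ (⊤ : ℕ∞) u₀ (Icc (-l) l))
    (hu₀pos : ∀ x ∈ Icc (-l) l, 0 < u₀ x)
    (hconvex : ∀ x ∈ Icc (-l) l, 0 < deriv (deriv (fun y => Real.log (u₀ y))) x)
    (hcompat : CompatCond l γ p u₀)
    (u : ℝ → ℝ → ℝ) (hu : IsLogDiffSol l γ p T u₀ u) :
    (∀ t ∈ Ico (0:ℝ) T,
      1 / ((∫ x in (-l)..l, u₀ x) ^ (2 - p) + (2 * (2 - p) * γ / (2 * l) ^ (p - 1)) * t) ≤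
        (∫ x in (-l)..l, u x t) ^ (p - 2)) ∧
    T ≤ (∫ x in (-l)..l, u₀ x) ^ (2 - p) / (-(2 * (2 - p) * γ / (2 * l) ^ (p - 1))) :=
  finite_time_blowup_p_gt_two_general hl hγ hp hu₀pos
    (fun x hx => (hconvex x (Ioo_subset_Icc_self hx)).le) hu
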